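/- Let ψ ∈ ℂ² ⊗ ℂ² be a unit vector and ρ = |ψ⟩⟨ψ| the corresponding pure density matrix. Then a² = b² (the two reduced states of a pure bipartite state are equally mixed), and ψ is entangled (i.e., not of the form φ ⊗ χ) if and only if c² > 1; equivalently, ψ is entangled if and only if a² = b² < 1. -/

import Mathlib

open scoped ComplexOrder Kronecker

noncomputable section

/-- The standard inner product on `ℂ^ι`, conjugate-linear in the first argument. -/
def inn {ι : Type*} [Fintype ι] (x y : ι → ℂ) : ℂ :=
  ∑ i, (starRingEnd ℂ) (x i) * y i

/-- The tensor product of two vectors, with coordinates indexed by pairs. -/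
def tens {m n : ℕ} (x : Fin m → ℂ) (y : Fin n → ℂ) : Fin m × Fin n → ℂ :=
  fun p => x p.1 * y p.2

/-- The outer product `|ψ⟩⟨ψ| = ψψ*`. -/
def outer {ι : Type*} (ψ : ι → ℂ) : Matrix ι ι ℂ :=
  Matrix.of fun i j => ψ i * (starRingEnd ℂ) (ψ j)

/-- The three Pauli matrices `σ₁, σ₂, σ₃`. -/
def pauli : Fin 3 → Matrix (Fin 2) (Fin 2) ℂ :=
  ![!![0, 1; 1, 0], !![0, -Complex.I; Complex.I, 0], !![1, 0; 0, -1]]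

/-- `a² = Σᵢ Tr(ρ(σᵢ ⊗ I₂))²`, the squared length of the first Bloch component. -/
def aSq (ρ : Matrix (Fin 2 × Fin 2) (Fin 2 × Fin 2) ℂ) : ℝ :=
  ∑ i : Fin 3, ((ρ * (pauli i ⊗ₖ (1 : Matrix (Fin 2) (Fin 2) ℂ))).trace.re) ^ 2

/-- `b² = Σᵢ Tr(ρ(I₂ ⊗ σᵢ))²`, the squared length of the second Bloch component. -/
def bSq (ρ : Matrix (Fin 2 × Fin 2) (Fin 2 × Fin 2) ℂ) : ℝ :=
  ∑ i : Fin 3, ((ρ * ((1 : Matrix (Fin 2) (Fin 2) ℂ) ⊗ₖ pauli i)).trace.re) ^ 2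

/-- `c² = Σᵢⱼ Tr(ρ(σᵢ ⊗ σⱼ))²`, the squared length of the correlation component. -/
def cSq (ρ : Matrix (Fin 2 × Fin 2) (Fin 2 × Fin 2) ℂ) : ℝ :=
  ∑ i : Fin 3, ∑ j : Fin 3, ((ρ * (pauli i ⊗ₖ pauli j)).trace.re) ^ 2

/-!
Read `ψ` as a matrix `Ψ`, so that `Tr (|ψ⟩⟨ψ| (A ⊗ B))` equals both `Tr (M A)` with `M = Ψ Bᵀ Ψᴴ`
and `Tr (N B)` with `N = (Ψᴴ A Ψ)ᵀ`. Every `2 × 2` matrix satisfies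
`∑ᵢ Tr (M σᵢ)² = (Tr M)² - 4 det M`, while `det M = det B · |det Ψ|²` and
`det N = det A · |det Ψ|²`. So everything is governed by the concurrence `C = 2 |det Ψ|`: taking
`B = 1` gives `a² = 1 - C²`, taking `A = 1` gives `b² = 1 - C²`, and taking `A = σᵢ`, of determinant
`-1`, gives `c² = a² + 3 C²`. Finally `ψ` is a product vector iff `Ψ` has rank at most one, i.e. iff
`C = 0`.
-/

section PauliMatrices

open Matrix

lemma pauli_isHermitian (i : Fin 3) : (pauli i).IsHermitian := by
  ext j k
  fin_cases i <;> fin_cases j <;> fin_cases k <;> simp [pauli]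

lemma det_pauli (i : Fin 3) : (pauli i).det = -1 := by
  fin_cases i <;> simp [pauli, det_fin_two]

lemma sum_sq_trace_mul_pauli (M : Matrix (Fin 2) (Fin 2) ℂ) :
    ∑ i, (M * pauli i).trace ^ 2 = M.trace ^ 2 - 4 * M.det := by
  have trace_mul_pauli_zero : (M * pauli 0).trace = M 0 1 + M 1 0 := by
    simp [pauli, trace_fin_two, mul_apply]
  have trace_mul_pauli_one : (M * pauli 1).trace = (M 0 1 - M 1 0) * Complex.I := by
    simp [pauli, trace_fin_two, mul_apply, sub_eq_add_neg, add_mul, add_comm]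
  have trace_mul_pauli_two : (M * pauli 2).trace = M 0 0 - M 1 1 := by
    simp [pauli, trace_fin_two, mul_apply, sub_eq_add_neg, add_comm]
  rw [Fin.sum_univ_three, trace_mul_pauli_zero, trace_mul_pauli_one, trace_mul_pauli_two,
    trace_fin_two, det_fin_two, mul_pow, Complex.I_sq]
  ring

end PauliMatrices

section Rank

open Matrix

variable {K m n : Type*} [Field K] [Fintype n]

lemma rank_le_one_iff_exists_eq_vecMulVec {M : Matrix m n K} :
    M.rank ≤ 1 ↔ ∃ x y, M = vecMulVec x y := by
  classical
  refine ⟨fun hM => ?_, ?_⟩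
  · obtain ⟨x, hx⟩ := finrank_le_one_iff.mp hM
    choose y hy using fun j => hx ⟨M *ᵥ Pi.single j 1, Pi.single j 1, rfl⟩
    refine ⟨x, y, ext fun i j => ?_⟩
    have hcol := congrFun (congrArg Subtype.val (hy j)) i
    simpa [vecMulVec_apply, mul_comm] using hcol.symm
  · rintro ⟨x, y, rfl⟩
    exact rank_vecMulVec_le x y

lemma rank_lt_card_iff_det_eq_zero [DecidableEq n] {M : Matrix n n K} :
    M.rank < Fintype.card n ↔ M.det = 0 := by
  refine ⟨fun hM => ?_, fun hM => ?_⟩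
  · contrapose! hM
    exact (rank_of_det_ne_zero hM).ge
  · refine M.rank_le_card_width.lt_of_ne fun hrank => ?_
    obtain ⟨v, hv, hMv⟩ := exists_mulVec_eq_zero_iff.mpr hM
    have hker : Module.finrank K M.mulVecLin.ker = 0 := by
      have hadd := M.mulVecLin.finrank_range_add_finrank_ker
      rw [Module.finrank_fintype_fun_eq_card, ← hrank, rank] at hadd
      lia
    have hmem : v ∈ M.mulVecLin.ker := hMv
    rw [Submodule.finrank_eq_zero.mp hker] at hmem
    exact hv hmem

end Rank

section PureStates

open Matrix

variable {m n : Type*}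

/-- The matrix `Ψ` of coefficients of a bipartite vector `ψ = ∑ Ψᵢₖ eᵢ ⊗ eₖ`, which turns product
vectors into matrices of rank at most one. Rows index the first factor, so `ψ = Matrix.vec Ψᵀ`. -/
def coeffMatrix (ψ : m × n → ℂ) : Matrix m n ℂ :=
  Matrix.of (Function.curry ψ)

lemma eq_tens_iff_coeffMatrix_eq_vecMulVec {k l : ℕ} {ψ : Fin k × Fin l → ℂ}
    {φ : Fin k → ℂ} {χ : Fin l → ℂ} :
    ψ = tens φ χ ↔ coeffMatrix ψ = vecMulVec φ χ :=
  Function.curry_injective.eq_iff.symm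

lemma outer_eq_vecMulVec (ψ : m → ℂ) : outer ψ = vecMulVec ψ (star ψ) :=
  rfl

lemma outer_isHermitian (ψ : m → ℂ) : (outer ψ).IsHermitian := by
  rw [IsHermitian, outer_eq_vecMulVec, conjTranspose_vecMulVec, star_star]

lemma trace_outer [Fintype m] (ψ : m → ℂ) : (outer ψ).trace = inn ψ ψ := by
  rw [outer_eq_vecMulVec, trace_vecMulVec, dotProduct_comm]
  rfl

lemma trace_outer_mul_kronecker_left [Fintype m] [Fintype n] (ψ : m × n → ℂ)
    (A : Matrix m m ℂ) (B : Matrix n n ℂ) :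
    (outer ψ * (A ⊗ₖ B)).trace
      = (coeffMatrix ψ * Bᵀ * (coeffMatrix ψ)ᴴ * A).trace := by
  have hψ : ψ = vec (coeffMatrix ψ)ᵀ := rfl
  have hstar : star ψ = vec (coeffMatrix ψ)ᴴ := rfl
  calc (outer ψ * (A ⊗ₖ B)).trace
      = ψ ⬝ᵥ (star ψ ᵥ* (A ⊗ₖ B)) := by
        rw [outer_eq_vecMulVec, vecMulVec_mul, trace_vecMulVec]
    _ = vec (coeffMatrix ψ)ᵀ ⬝ᵥ vec (Bᵀ * (coeffMatrix ψ)ᴴ * A) := by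
        rw [hstar, vec_vecMul_kronecker, ← hψ]
    _ = (coeffMatrix ψ * Bᵀ * (coeffMatrix ψ)ᴴ * A).trace := by
        rw [vec_dotProduct_vec, transpose_transpose]
        simp only [Matrix.mul_assoc]

lemma trace_outer_mul_kronecker_right [Fintype m] [Fintype n] (ψ : m × n → ℂ)
    (A : Matrix m m ℂ) (B : Matrix n n ℂ) :
    (outer ψ * (A ⊗ₖ B)).trace
      = (((coeffMatrix ψ)ᴴ * A * coeffMatrix ψ)ᵀ * B).trace := by
  rw [trace_outer_mul_kronecker_left, ← trace_transpose (_ᵀ * B), transpose_mul,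
    transpose_transpose, trace_mul_comm Bᵀ, Matrix.mul_assoc (coeffMatrix ψ * Bᵀ),
    trace_mul_comm (coeffMatrix ψ * Bᵀ), ← Matrix.mul_assoc]

end PureStates

section HermitianTraces

open Matrix

variable {R m n : Type*}

lemma isHermitian_kronecker [CommMagma R] [StarMul R] {A : Matrix m m R} {B : Matrix n n R}
    (hA : A.IsHermitian) (hB : B.IsHermitian) : (A ⊗ₖ B).IsHermitian := by
  rw [IsHermitian, conjTranspose_kronecker, hA.eq, hB.eq]

lemma isSelfAdjoint_trace_mul [NonUnitalCommSemiring R] [StarRing R] [Fintype n]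
    {A B : Matrix n n R} (hA : A.IsHermitian) (hB : B.IsHermitian) :
    IsSelfAdjoint (A * B).trace := by
  rw [IsSelfAdjoint, ← trace_conjTranspose, conjTranspose_mul, hA.eq, hB.eq, trace_mul_comm]

lemma ofReal_re_trace_mul [Fintype n] {A B : Matrix n n ℂ} (hA : A.IsHermitian)
    (hB : B.IsHermitian) : ((A * B).trace.re : ℂ) = (A * B).trace :=
  Complex.conj_eq_iff_re.mp (isSelfAdjoint_trace_mul hA hB)

variable {ρ : Matrix (Fin 2 × Fin 2) (Fin 2 × Fin 2) ℂ}

lemma ofReal_aSq (hρ : ρ.IsHermitian) :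
    (aSq ρ : ℂ) = ∑ i, (ρ * (pauli i ⊗ₖ 1)).trace ^ 2 := by
  simp only [aSq, Complex.ofReal_sum, Complex.ofReal_pow,
    ofReal_re_trace_mul hρ (isHermitian_kronecker (pauli_isHermitian _) isHermitian_one)]

lemma ofReal_bSq (hρ : ρ.IsHermitian) :
    (bSq ρ : ℂ) = ∑ j, (ρ * (1 ⊗ₖ pauli j)).trace ^ 2 := by
  simp only [bSq, Complex.ofReal_sum, Complex.ofReal_pow,
    ofReal_re_trace_mul hρ (isHermitian_kronecker isHermitian_one (pauli_isHermitian _))]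

lemma ofReal_cSq (hρ : ρ.IsHermitian) :
    (cSq ρ : ℂ) = ∑ i, ∑ j, (ρ * (pauli i ⊗ₖ pauli j)).trace ^ 2 := by
  simp only [cSq, Complex.ofReal_sum, Complex.ofReal_pow,
    ofReal_re_trace_mul hρ (isHermitian_kronecker (pauli_isHermitian _) (pauli_isHermitian _))]

end HermitianTraces

section Concurrence

open Matrix

/-- The concurrence `C = 2 |det Ψ|` of a two-qubit vector, its standard measure of entanglement. -/
def concurrence (ψ : Fin 2 × Fin 2 → ℂ) : ℝ :=
  2 * ‖(coeffMatrix ψ).det‖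

variable (ψ : Fin 2 × Fin 2 → ℂ)

lemma exists_eq_tens_iff_concurrence_eq_zero :
    (∃ φ χ, ψ = tens φ χ) ↔ concurrence ψ = 0 :=
  calc (∃ φ χ, ψ = tens φ χ)
      ↔ ∃ φ χ, coeffMatrix ψ = vecMulVec φ χ := by
        simp only [eq_tens_iff_coeffMatrix_eq_vecMulVec]
    _ ↔ (coeffMatrix ψ).rank < Fintype.card (Fin 2) := by
        rw [← rank_le_one_iff_exists_eq_vecMulVec, Fintype.card_fin, Nat.lt_succ_iff]
    _ ↔ (coeffMatrix ψ).det = 0 := rank_lt_card_iff_det_eq_zero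
    _ ↔ concurrence ψ = 0 := by simp [concurrence]

lemma ofReal_concurrence_sq :
    (concurrence ψ : ℂ) ^ 2 = 4 * ((coeffMatrix ψ).det * star (coeffMatrix ψ).det) := by
  rw [Complex.star_def, Complex.mul_conj', concurrence, Complex.ofReal_mul, mul_pow,
    Complex.ofReal_ofNat]
  ring

lemma sum_sq_trace_outer_mul_pauli_kronecker (B : Matrix (Fin 2) (Fin 2) ℂ) :
    ∑ i, (outer ψ * (pauli i ⊗ₖ B)).trace ^ 2
      = (outer ψ * (1 ⊗ₖ B)).trace ^ 2 - B.det * (concurrence ψ : ℂ) ^ 2 := by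
  simp only [trace_outer_mul_kronecker_left, sum_sq_trace_mul_pauli, Matrix.mul_one, det_mul,
    det_transpose, det_conjTranspose, ofReal_concurrence_sq]
  ring

lemma sum_sq_trace_outer_mul_kronecker_pauli (A : Matrix (Fin 2) (Fin 2) ℂ) :
    ∑ j, (outer ψ * (A ⊗ₖ pauli j)).trace ^ 2
      = (outer ψ * (A ⊗ₖ 1)).trace ^ 2 - A.det * (concurrence ψ : ℂ) ^ 2 := by
  simp only [trace_outer_mul_kronecker_right, sum_sq_trace_mul_pauli, Matrix.mul_one, det_mul,
    det_transpose, det_conjTranspose, ofReal_concurrence_sq]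
  ring

lemma ofReal_aSq_outer :
    (aSq (outer ψ) : ℂ) = inn ψ ψ ^ 2 - (concurrence ψ : ℂ) ^ 2 := by
  rw [ofReal_aSq (outer_isHermitian ψ), sum_sq_trace_outer_mul_pauli_kronecker,
    one_kronecker_one, Matrix.mul_one, trace_outer, det_one, one_mul]

lemma ofReal_bSq_outer :
    (bSq (outer ψ) : ℂ) = inn ψ ψ ^ 2 - (concurrence ψ : ℂ) ^ 2 := by
  rw [ofReal_bSq (outer_isHermitian ψ), sum_sq_trace_outer_mul_kronecker_pauli,
    one_kronecker_one, Matrix.mul_one, trace_outer, det_one, one_mul]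

lemma cSq_outer : cSq (outer ψ) = aSq (outer ψ) + 3 * concurrence ψ ^ 2 := by
  apply Complex.ofReal_injective
  push_cast
  rw [ofReal_cSq (outer_isHermitian ψ), ofReal_aSq (outer_isHermitian ψ)]
  simp only [sum_sq_trace_outer_mul_kronecker_pauli, det_pauli, neg_one_mul, sub_neg_eq_add,
    Finset.sum_add_distrib, Finset.sum_const, Finset.card_univ, Fintype.card_fin, nsmul_eq_mul,
    Nat.cast_ofNat]

end Concurrence

/-- For a pure two-qubit state `ρ = |ψ⟩⟨ψ|`: the two reduced states are equally mixed
(`a² = b²`), and `ψ` is entangled iff `c² > 1`, equivalently iff `a² = b² < 1`. -/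
theorem stmt17 (ψ : Fin 2 × Fin 2 → ℂ) (hψ : inn ψ ψ = 1) :
    aSq (outer ψ) = bSq (outer ψ) ∧
    ((¬ ∃ (φ χ : Fin 2 → ℂ), ψ = tens φ χ) ↔ 1 < cSq (outer ψ)) ∧
    ((¬ ∃ (φ χ : Fin 2 → ℂ), ψ = tens φ χ) ↔ aSq (outer ψ) < 1) := by
  have ha : aSq (outer ψ) = 1 - concurrence ψ ^ 2 :=
    Complex.ofReal_injective <| by simp [ofReal_aSq_outer, hψ]
  have hb : bSq (outer ψ) = 1 - concurrence ψ ^ 2 :=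
    Complex.ofReal_injective <| by simp [ofReal_bSq_outer, hψ]
  have hc : cSq (outer ψ) = 1 + 2 * concurrence ψ ^ 2 := by
    rw [cSq_outer, ha]
    ring
  have entangled_iff : (¬ ∃ φ χ, ψ = tens φ χ) ↔ 0 < concurrence ψ ^ 2 := by
    rw [exists_eq_tens_iff_concurrence_eq_zero, ← ne_eq, sq_pos_iff]
  rw [entangled_iff, ha, hb, hc]
  exact ⟨rfl, by simp, by simp⟩
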